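/- arXiv:math/0603569 — 2 statements merged into one kernel-verified Lean document; each statement's English description precedes it below -/
import Mathlib

section
/- Let $\chi$ be a non-principal Dirichlet character modulo $k$, and let $\sigma \in (1/2, 1]$, $t \in \mathbb{R}$, and $\varepsilon > 0$. Then $|L(\sigma + it, \chi)| \ll_{\varepsilon,\sigma} k^{(1-\sigma)/2 + \varepsilon} (1+|t|)^{1-\sigma+\varepsilon}$, where the implied constant depends only on $\varepsilon$ and $\sigma$. -/
/-!
For a primitive character `χ ≠ 1` modulo `N`, Fourier inversion on `ZMod N` writes
`N χ(j) = τ ∑ a, χ⁻¹(-a) e(aj/N)` with `|τ| = √N`, where `τ` is the Gauss sum. Summing over an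
interval of `j` gives geometric progressions, and `sin x ≥ 2x/π` on `[0, π/2]` turns this into the
Pólya–Vinogradov bound `√N (1 + log N)` (`polya_vinogradov`).

Cutting the Dirichlet series at `T` leaves a tail which by partial summation is
`s ∫_T^∞ G(t) t^(-s-1) dt`, with `G` the partial sums of `χ` beyond `T`. Bounded `G` makes this
a Mellin transform, holomorphic for `0 < re s`, so the formula valid for `1 < re s` persists there
by the identity theorem (`LFunction_trunc`). With `T` about `√N (1 + |t|)` the finite sum and the
tail are both of the required size, the logarithms being absorbed in `ε`
(`LFunction_bound_primitive`).

The Pólya–Vinogradov argument requires primitivity. For general `χ` modulo `k`, `L(s, χ)` is the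
`L`-function of the inducing primitive character times `∏ p ∣ k, (1 - χ*(p) p^(-s))`, and this
product is at most `2^ω(k) ≪ k^ε` (`prod_two_le`).
-/

open Complex
open Filter Topology Asymptotics MeasureTheory

/-! ### The Pólya–Vinogradov inequality for primitive characters -/

/-- A geometric sum with ratio `e(v/N)` is at most `2 / |e(v/N) - 1| = 1 / sin (πv/N)`. Near either end
of the circle the sine is bounded below by a chord; the right side adds both cases so as to be
symmetric under `v ↦ N - v`. -/
theorem two_div_norm_le {N v : ℕ} (hv : 1 ≤ v) (hvN : v < N) :
    2 / ‖exp (2 * Real.pi * I * v / N) - 1‖ ≤ N / 2 * ((v : ℝ)⁻¹ + ((N - v : ℕ) : ℝ)⁻¹) := by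
  have hN : (0 : ℝ) < N := by exact_mod_cast (by omega : 0 < N)
  have hv0 : (0 : ℝ) < v := by exact_mod_cast hv
  have hw0 : (0 : ℝ) < ((N - v : ℕ) : ℝ) := by exact_mod_cast (by omega : 0 < N - v)
  have hw : ((N - v : ℕ) : ℝ) = N - v := by push_cast [hvN.le]; ring
  have key : ∀ x : ℝ, 0 < x → 2 * x ≤ N → 2 * x / N ≤ Real.sin (Real.pi * x / N) := by
    intro x hx hxN
    have := Real.mul_le_sin (x := Real.pi * x / N) (by positivity)
      (by rw [div_le_div_iff₀ hN two_pos]; nlinarith [Real.pi_pos])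
    convert this using 1
    field_simp
  have h1 : ‖exp (2 * Real.pi * I * v / N) - 1‖ = 2 * |Real.sin (Real.pi * v / N)| := by
    have := Complex.norm_exp_I_mul_ofReal_sub_one (2 * Real.pi * v / N)
    push_cast at this
    rw [show (2 * Real.pi * I * v / N : ℂ) = I * (2 * Real.pi * v / N) by ring, this, norm_mul]
    simp only [Real.norm_eq_abs, abs_two]
    congr 3; ring
  rw [h1]
  have fin : ∀ x : ℝ, 0 < x → 2 * x ≤ N → Real.sin (Real.pi * x / N) = Real.sin (Real.pi * v / N) →
      2 / (2 * |Real.sin (Real.pi * v / N)|) ≤ N / 2 * x⁻¹ := by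
    intro x hx hxN h
    have h2 := key x hx hxN
    rw [h] at h2
    have h3 : 0 < 2 * x / N := by positivity
    calc 2 / (2 * |Real.sin (Real.pi * v / N)|) ≤ 2 / (2 * (2 * x / N)) := by
          gcongr; exact h2.trans (le_abs_self _)
      _ = N / 2 * x⁻¹ := by field_simp
  rcases le_total (2 * (v : ℝ)) N with h | h
  · refine (fin v hv0 h rfl).trans ?_
    gcongr
    simp
  · refine (fin _ hw0 (by rw [hw]; linarith) ?_).trans ?_
    · rw [hw, ← Real.sin_pi_sub]; congr 1; field_simp; ring
    · gcongr; simp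

/-- Fourier expansion of a primitive character, and the absolute value of its Gauss sum `τ`. The
expansion at `j = 1` reads `N = τ * conj τ`, which is where the second assertion comes from. -/
theorem norm_gaussSum_eq {N : ℕ} [NeZero N] {χ : DirichletCharacter ℂ N} (hχ : χ.IsPrimitive) :
    (∀ j : ZMod N, (N : ℂ) * χ j =
      gaussSum χ ZMod.stdAddChar * ∑ a : ZMod N, χ⁻¹ (-a) * ZMod.stdAddChar (a * j)) ∧
    ‖gaussSum χ ZMod.stdAddChar‖ = √N := by
  have h0 : ∀ j : ZMod N, (N : ℂ) * χ j =
      gaussSum χ ZMod.stdAddChar * ∑ a : ZMod N, χ⁻¹ (-a) * ZMod.stdAddChar (a * j) := by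
    intro j
    have h := congr_fun (ZMod.dft_dft (fun x ↦ χ x)) (-j)
    simp only [neg_neg, smul_eq_mul] at h
    rw [← h, ZMod.dft_apply, Finset.mul_sum]
    refine Finset.sum_congr rfl fun a _ ↦ ?_
    have := DirichletCharacter.IsPrimitive.fourierTransform_eq_inv_mul_gaussSum hχ a
    rw [this, smul_eq_mul, mul_neg, neg_neg]
    ring
  refine ⟨h0, ?_⟩
  have h1 := congrArg norm (h0 1)
  have h2 : ‖∑ a : ZMod N, χ⁻¹ (-a) * ZMod.stdAddChar (a * 1)‖ = ‖gaussSum χ ZMod.stdAddChar‖ := by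
    rw [← norm_star, star_sum, gaussSum, ← Equiv.sum_comp (Equiv.neg (ZMod N))]
    congr 1
    refine Finset.sum_congr rfl fun a _ ↦ ?_
    rw [star_mul', MulChar.star_apply', inv_inv]
    simp only [Equiv.neg_apply, neg_neg, mul_one, ZMod.stdAddChar_apply]
    rw [AddChar.map_neg_eq_inv, Circle.coe_inv_eq_conj]
    simp
  rw [map_one, mul_one, norm_mul, h2] at h1
  simp only [Complex.norm_natCast] at h1
  rw [h1, Real.sqrt_mul_self (norm_nonneg _)]

theorem sum_ZMod_eq {N : ℕ} [NeZero N] (f : ℕ → ℝ) :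
    ∑ a : ZMod N, f a.val = ∑ v ∈ Finset.range N, f v :=
  Finset.sum_bij (fun a _ ↦ a.val) (fun a _ ↦ by simp [ZMod.val_lt])
    (fun a _ b _ h ↦ ZMod.val_injective N h)
    (fun v hv ↦ ⟨(v : ZMod N), Finset.mem_univ _, ZMod.val_cast_of_lt (by simpa using hv)⟩)
    (fun _ _ ↦ rfl)

theorem sum_inv_le (N : ℕ) :
    ∑ v ∈ Finset.Ico 1 N, (v : ℝ)⁻¹ ≤ 1 + Real.log N := by
  have h := harmonic_le_one_add_log N
  rw [harmonic_eq_sum_Icc] at h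
  push_cast at h
  refine le_trans (Finset.sum_le_sum_of_subset_of_nonneg (fun x hx ↦ ?_) fun _ _ _ ↦ by positivity) h
  simp only [Finset.mem_Ico, Finset.mem_Icc] at *
  omega

/-- **Pólya–Vinogradov inequality** for primitive characters, over an arbitrary interval. -/
theorem polya_vinogradov {N : ℕ} [NeZero N] {χ : DirichletCharacter ℂ N} (hχ : χ.IsPrimitive)
    (h1 : χ ≠ 1) {m n : ℕ} (hmn : m ≤ n) :
    ‖∑ j ∈ Finset.Ico m n, χ (j : ZMod N)‖ ≤ √N * (1 + Real.log N) := by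
  obtain ⟨hF, hτ⟩ := norm_gaussSum_eq hχ
  have hN1 : N ≠ 1 := by
    rintro rfl
    exact h1 (DirichletCharacter.level_one χ)
  have hN2 : 1 < N := by have := NeZero.pos N; omega
  have hNt : Nontrivial (ZMod N) := by
    have : Fact (1 < N) := ⟨hN2⟩
    infer_instance
  have hN : (0 : ℝ) < N := by exact_mod_cast NeZero.pos N
  have hS : (N : ℂ) * ∑ j ∈ Finset.Ico m n, χ (j : ZMod N) = gaussSum χ ZMod.stdAddChar *
      ∑ a : ZMod N, χ⁻¹ (-a) * ∑ j ∈ Finset.Ico m n, ZMod.stdAddChar a ^ j := by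
    simp_rw [Finset.mul_sum, hF, Finset.mul_sum]
    rw [Finset.sum_comm]
    refine Finset.sum_congr rfl fun a _ ↦ Finset.sum_congr rfl fun j _ ↦ ?_
    rw [← AddChar.map_nsmul_eq_pow, nsmul_eq_mul, mul_comm a]
  -- Bound for the term of frequency `v`; the zero frequency drops out since `χ⁻¹ 0 = 0`.
  let g : ℕ → ℝ := fun v ↦
    if v = 0 then 0 else N / 2 * ((v : ℝ)⁻¹ + ((N - v : ℕ) : ℝ)⁻¹)
  have hterm : ∀ a : ZMod N,
      ‖χ⁻¹ (-a) * ∑ j ∈ Finset.Ico m n, ZMod.stdAddChar a ^ j‖ ≤ g a.val := by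
    intro a
    by_cases ha : a = 0
    · subst ha
      simp [g, MulChar.map_zero]
    have hv : a.val ≠ 0 := by rwa [Ne, ZMod.val_eq_zero]
    simp only [g, hv, if_false]
    have hne : (ZMod.stdAddChar a : ℂ) ≠ 1 := by
      intro h
      rw [← AddChar.map_zero_eq_one (ZMod.stdAddChar (N := N))] at h
      exact ha (ZMod.injective_stdAddChar h)
    rw [norm_mul, geom_sum_Ico hne hmn, norm_div]
    have hnum : ‖(ZMod.stdAddChar a : ℂ) ^ n - ZMod.stdAddChar a ^ m‖ ≤ 2 := by
      refine (norm_sub_le _ _).trans ?_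
      simp only [norm_pow, ZMod.stdAddChar_apply, Circle.norm_coe, one_pow]; norm_num
    have hval : (ZMod.stdAddChar a : ℂ) = exp (2 * Real.pi * I * a.val / N) := by
      have := ZMod.stdAddChar_coe (N := N) (a.val : ℤ)
      simpa using this
    calc _ ≤ 1 * (2 / ‖(ZMod.stdAddChar a : ℂ) - 1‖) := by
          gcongr
          exact DirichletCharacter.norm_le_one _ _
      _ ≤ _ := by
          rw [one_mul, hval]
          exact two_div_norm_le (Nat.one_le_iff_ne_zero.mpr hv) (ZMod.val_lt a)
  have hsum : ∑ a : ZMod N, g a.val ≤ N * (1 + Real.log N) := by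
    rw [sum_ZMod_eq, Finset.range_eq_Ico, Finset.sum_eq_sum_Ico_succ_bot (NeZero.pos N)]
    have : ∀ v ∈ Finset.Ico (0 + 1) N, g v = N / 2 * ((v : ℝ)⁻¹ + ((N - v : ℕ) : ℝ)⁻¹) := by
      intro v hv
      have : v ≠ 0 := by simp at hv; omega
      simp [g, this]
    rw [Finset.sum_congr rfl this, ← Finset.mul_sum, Finset.sum_add_distrib]
    have hr : ∑ v ∈ Finset.Ico (0 + 1) N, ((N - v : ℕ) : ℝ)⁻¹ =
        ∑ v ∈ Finset.Ico 1 N, (v : ℝ)⁻¹ := by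
      refine Finset.sum_nbij' (fun v ↦ N - v) (fun v ↦ N - v) ?_ ?_ ?_ ?_ ?_ <;>
        intro v hv <;> simp at hv ⊢ <;> omega
    rw [hr]
    have := sum_inv_le N
    simp only [g, if_true, zero_add]
    nlinarith
  have hfin := congrArg norm hS
  rw [norm_mul, norm_mul, hτ, Complex.norm_natCast] at hfin
  have : (N : ℝ) * ‖∑ j ∈ Finset.Ico m n, χ (j : ZMod N)‖ ≤ N * (√N * (1 + Real.log N)) := by
    rw [hfin]
    calc _ ≤ √N * (N * (1 + Real.log N)) := by
          gcongr
          exact (norm_sum_le _ _).trans ((Finset.sum_le_sum fun a _ ↦ hterm a).trans hsum)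
      _ = _ := by ring
  exact le_of_mul_le_mul_left this hN
/-! ### Truncating the Dirichlet series -/

/-- Approximation of `L(s, χ)` by a partial sum of its Dirichlet series for `0 < re s`, given a
bound `M` for all character sums over intervals. -/
theorem LFunction_trunc {N : ℕ} [NeZero N] {χ : DirichletCharacter ℂ N} (h1 : χ ≠ 1) {M : ℝ}
    (hM : ∀ m n : ℕ, m ≤ n → ‖∑ j ∈ Finset.Ico m n, χ (j : ZMod N)‖ ≤ M) {T : ℕ} (hT : 1 ≤ T)
    {s : ℂ} (hs : 0 < s.re) :
    ‖DirichletCharacter.LFunction χ s - ∑ n ∈ Finset.Icc 1 T, χ (n : ZMod N) * (n : ℂ) ^ (-s)‖ ≤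
      ‖s‖ * (M * ((T : ℝ) ^ (-s.re) / s.re)) := by
  have hM0 : 0 ≤ M := by simpa using hM 0 0 le_rfl
  have hT0 : (0 : ℝ) < T := by exact_mod_cast hT
  -- `G` vanishes up to `T`, so its Mellin transform has no obstruction at `0`, and it is bounded,
  -- which gives convergence at infinity.
  let g : ℕ → ℂ := fun n ↦ if T < n then χ (n : ZMod N) else 0
  let F : ℕ → ℂ := fun n ↦ ∑ k ∈ Finset.Icc 1 n, g k
  let G : ℝ → ℂ := fun t ↦ F ⌊t⌋₊
  have hF0 : ∀ n ≤ T, F n = 0 := by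
    intro n hn
    refine Finset.sum_eq_zero fun k hk ↦ ?_
    simp only [Finset.mem_Icc] at hk
    simp only [g, if_neg (show ¬ T < k by omega)]
  have hFM : ∀ n, ‖F n‖ ≤ M := by
    intro n
    rcases le_total n T with h | h
    · rw [hF0 n h]; simpa using hM0
    · have : F n = ∑ j ∈ Finset.Ico (T + 1) (n + 1), χ (j : ZMod N) := by
        simp only [F, g]
        rw [← Finset.sum_filter]
        refine Finset.sum_congr ?_ fun _ _ ↦ rfl
        ext k
        simp only [Finset.mem_filter, Finset.mem_Icc, Finset.mem_Ico]
        omega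
      rw [this]
      exact hM _ _ (by omega)
  have hGM : ∀ t, ‖G t‖ ≤ M := fun t ↦ hFM _
  have hG0 : ∀ t : ℝ, t ≤ T → G t = 0 := fun t ht ↦
    hF0 _ (Nat.floor_le_of_le ht)
  have hGmeas : Measurable G := (measurable_from_nat (f := F)).comp Nat.measurable_floor
  have hGloc : LocallyIntegrableOn G (Set.Ioi 0) :=
    ((locallyIntegrable_const M).mono hGmeas.aestronglyMeasurable
      (ae_of_all _ fun t ↦ (hGM t).trans (le_abs_self M))).locallyIntegrableOn _
  have hGtop : G =O[atTop] fun t : ℝ ↦ t ^ (-(0 : ℝ)) :=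
    IsBigO.of_bound M (Eventually.of_forall fun t ↦ by simpa using hGM t)
  have hGbot (b : ℝ) : G =O[𝓝[>] 0] fun t : ℝ ↦ t ^ (-b) := by
    refine IsBigO.of_bound 0 ?_
    filter_upwards [Ioo_mem_nhdsGT hT0] with t ht
    simp [hG0 t ht.2.le]
  have hdiff : ∀ z : ℂ, 0 < z.re → DifferentiableAt ℂ (fun z ↦ mellin G (-z)) z := by
    intro z hz
    have : DifferentiableAt ℂ (mellin G) (-z) :=
      mellin_differentiableAt_of_isBigO_rpow hGloc hGtop (by simpa using hz)
        (hGbot (-z.re - 1)) (by simp)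
    exact this.comp z differentiableAt_id.neg
  have hmellin : ∀ z : ℂ, mellin G (-z) = ∫ t in Set.Ioi (T : ℝ), G t * (t : ℂ) ^ (-(z + 1)) := by
    intro z
    rw [mellin, ← setIntegral_eq_of_subset_of_forall_sdiff_eq_zero measurableSet_Ioi
      (Set.Ioi_subset_Ioi hT0.le)]
    · refine setIntegral_congr_fun measurableSet_Ioi fun t _ ↦ ?_
      simp only [smul_eq_mul]
      rw [mul_comm]; congr 2; ring
    · intro t ht
      rw [hG0 t (by simpa using ht.2), zero_mul]
  let P : ℂ → ℂ := fun z ↦ ∑ n ∈ Finset.Icc 1 T, χ (n : ZMod N) * (n : ℂ) ^ (-z)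
  have hgt : ∀ z : ℂ, 1 < z.re →
      DirichletCharacter.LFunction χ z = P z + z * mellin G (-z) := by
    intro z hz
    have hsχ : LSeriesSummable (fun n ↦ χ (n : ZMod N)) z :=
      DirichletCharacter.LSeriesSummable_of_one_lt_re χ hz
    have hsg : LSeriesSummable g z := by
      refine LSeriesSummable_of_bounded_of_one_lt_re (m := 1) (fun n _ ↦ ?_) hz
      simp only [g]
      split_ifs
      · exact DirichletCharacter.norm_le_one _ _
      · simp
    have hg : LSeries g z = z * mellin G (-z) := by
      rw [LSeries_eq_mul_integral g le_rfl (by linarith) hsg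
        (IsBigO.of_bound M (Eventually.of_forall fun n ↦ by simpa using hFM n)), hmellin]
      congr 1
      refine setIntegral_eq_of_subset_of_forall_sdiff_eq_zero measurableSet_Ioi
        (Set.Ioi_subset_Ioi (by exact_mod_cast hT)) fun t ht ↦ ?_
      have : G t = 0 := hG0 t (by simpa using ht.2)
      simp only [G, F] at this
      rw [this, zero_mul]
    have hd : LSeries (fun n ↦ χ (n : ZMod N)) z - LSeries g z = P z := by
      rw [← LSeries_sub hsχ hsg, LSeries, tsum_eq_sum (s := Finset.Icc 1 T)]
      · refine Finset.sum_congr rfl fun n hn ↦ ?_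
        simp only [Finset.mem_Icc] at hn
        rw [LSeries.term_of_ne_zero (by omega)]
        simp [g, show ¬ T < n by omega, cpow_neg, div_eq_mul_inv]
      · intro n hn
        rcases Nat.eq_zero_or_pos n with rfl | h
        · simp
        · rw [LSeries.term_of_ne_zero h.ne']
          simp only [Finset.mem_Icc, not_and, not_le] at hn
          simp [g, hn h]
    rw [DirichletCharacter.LFunction_eq_LSeries χ hz, ← hg, ← hd]
    ring
  have hcont : DirichletCharacter.LFunction χ s = P s + s * mellin G (-s) := by
    have hopen : IsOpen {z : ℂ | 0 < z.re} := isOpen_lt continuous_const continuous_re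
    have hP : Differentiable ℂ P := by
      refine Differentiable.fun_sum fun n hn ↦ ?_
      simp only [Finset.mem_Icc] at hn
      have : (n : ℂ) ≠ 0 := by exact_mod_cast (by omega : n ≠ 0)
      exact (differentiable_const _).mul (differentiable_neg.const_cpow (Or.inl this))
    have e1 : AnalyticOnNhd ℂ (DirichletCharacter.LFunction χ) {z : ℂ | 0 < z.re} :=
      (DirichletCharacter.differentiable_LFunction h1).differentiableOn.analyticOnNhd hopen
    have e2 : AnalyticOnNhd ℂ (fun z ↦ P z + z * mellin G (-z)) {z : ℂ | 0 < z.re} := by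
      refine DifferentiableOn.analyticOnNhd (fun z hz ↦ ?_) hopen
      exact ((hP z).add (differentiableAt_id.mul (hdiff z hz))).differentiableWithinAt
    refine e1.eqOn_of_preconnected_of_eventuallyEq e2 (convex_halfSpace_re_gt 0).isPreconnected
      (z₀ := 2) (by simp) ?_ hs
    filter_upwards [(isOpen_lt continuous_const continuous_re).mem_nhds
      (show (1 : ℝ) < (2 : ℂ).re by simp)] with z hz using hgt z hz
  rw [hcont, add_sub_cancel_left, norm_mul]
  gcongr
  rw [hmellin]
  have hint : ∫ t in Set.Ioi (T : ℝ), M * t ^ (-s.re - 1) = M * ((T : ℝ) ^ (-s.re) / s.re) := by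
    rw [integral_const_mul, integral_Ioi_rpow_of_lt (by linarith) hT0]
    rw [sub_add_cancel, neg_div_neg_eq]
  rw [← hint]
  refine norm_integral_le_of_norm_le
    ((integrableOn_Ioi_rpow_of_lt (by linarith) hT0).const_mul M) ?_
  filter_upwards [ae_restrict_mem measurableSet_Ioi] with t ht
  rw [norm_mul, norm_cpow_eq_rpow_re_of_pos (hT0.trans ht)]
  have : (-(s + 1)).re = -s.re - 1 := by simp; ring
  rw [this]
  gcongr
  · exact Real.rpow_nonneg (hT0.trans ht).le _
  · exact hGM t

/-! ### Final estimates -/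

theorem one_add_log_le {δ : ℝ} (hδ : 0 < δ) {y : ℝ} (hy : 1 ≤ y) :
    1 + Real.log y ≤ (1 + 1 / δ) * y ^ δ := by
  have h1 := Real.log_le_rpow_div (zero_le_one.trans hy) hδ
  have h2 := Real.one_le_rpow hy hδ.le
  calc 1 + Real.log y ≤ y ^ δ + y ^ δ / δ := add_le_add h2 h1
    _ = _ := by ring

/-- `2 ^ ω(k) ≪ k ^ δ`: all but finitely many primes satisfy `2 ≤ p ^ δ`. -/
theorem prod_two_le {δ : ℝ} (hδ : 0 < δ) :
    ∃ C : ℝ, 0 < C ∧ ∀ k : ℕ, k ≠ 0 → ∏ _p ∈ k.primeFactors, (2 : ℝ) ≤ C * (k : ℝ) ^ δ := by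
  obtain ⟨B, hB⟩ := ((tendsto_rpow_atTop hδ).comp tendsto_natCast_atTop_atTop).eventually_ge_atTop 2
    |>.exists_forall_of_atTop
  refine ⟨2 ^ B, by positivity, fun k hk ↦ ?_⟩
  have h1 : ∏ _p ∈ k.primeFactors, (2 : ℝ) ≤
      ∏ p ∈ k.primeFactors, ((if p < B then 2 else 1) * (p : ℝ) ^ δ) := by
    refine Finset.prod_le_prod (fun _ _ ↦ by norm_num) fun p hp ↦ ?_
    split_ifs with h
    · have : (1 : ℝ) ≤ (p : ℝ) ^ δ :=
        Real.one_le_rpow (by exact_mod_cast (Nat.prime_of_mem_primeFactors hp).one_le) hδ.le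
      linarith
    · rw [one_mul]
      exact hB p (not_lt.mp h)
  refine h1.trans ?_
  rw [Finset.prod_mul_distrib]
  gcongr ?_ * ?_
  · rw [← Finset.prod_filter, Finset.prod_const]
    refine pow_le_pow_right₀ one_le_two ?_
    refine (Finset.card_le_card (t := Finset.range B) fun p hp ↦ ?_).trans (by simp)
    simpa using (Finset.mem_filter.mp hp).2
  · rw [Real.finsetProd_rpow _ _ fun _ _ ↦ by positivity]
    gcongr
    rw [← Nat.cast_prod]
    exact_mod_cast Nat.le_of_dvd (Nat.pos_of_ne_zero hk) (Nat.prod_primeFactors_dvd k)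

/-- The trivial bound for the finite sum, from `n ^ (-σ) = n ^ (1 - σ) / n`; unlike comparison with
`∫ x ^ (-σ)` it needs no separate treatment of `σ = 1`. -/
theorem norm_sum_le_rpow {N : ℕ} (χ : DirichletCharacter ℂ N) {s : ℂ} (hs : s.re ≤ 1) {δ : ℝ}
    (hδ : 0 < δ) {T : ℕ} (hT : 1 ≤ T) :
    ‖∑ n ∈ Finset.Icc 1 T, χ (n : ZMod N) * (n : ℂ) ^ (-s)‖ ≤
      (1 + 1 / δ) * (T : ℝ) ^ (1 - s.re + δ) := by
  have hT0 : (0 : ℝ) < T := by exact_mod_cast hT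
  calc _ ≤ ∑ n ∈ Finset.Icc 1 T, (T : ℝ) ^ (1 - s.re) * (n : ℝ)⁻¹ := by
        refine norm_sum_le_of_le _ fun n hn ↦ ?_
        rw [Finset.mem_Icc] at hn
        have hn0 : (0 : ℝ) < n := by exact_mod_cast hn.1
        rw [norm_mul, norm_natCast_cpow_of_pos hn.1]
        calc _ ≤ 1 * (n : ℝ) ^ (-s).re := by
              gcongr; exact DirichletCharacter.norm_le_one _ _
          _ = (n : ℝ) ^ (1 - s.re) * (n : ℝ)⁻¹ := by
              rw [one_mul, ← Real.rpow_neg_one (n : ℝ), ← Real.rpow_add hn0, neg_re]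
              congr 1; ring
          _ ≤ _ := by
              gcongr
              exact hn.2
    _ ≤ (T : ℝ) ^ (1 - s.re) * (1 + Real.log T) := by
        rw [← Finset.mul_sum]
        gcongr
        have h := harmonic_le_one_add_log T
        rw [harmonic_eq_sum_Icc] at h
        push_cast at h
        exact h
    _ ≤ (T : ℝ) ^ (1 - s.re) * ((1 + 1 / δ) * (T : ℝ) ^ δ) := by
        gcongr
        exact one_add_log_le hδ (by exact_mod_cast hT)
    _ = _ := by rw [Real.rpow_add hT0]; ring

theorem LFunction_bound_primitive {σ : ℝ} (hσ : σ ∈ Set.Ioc (1/2 : ℝ) 1) {δ : ℝ} (hδ : 0 < δ) :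
    ∃ C : ℝ, 0 < C ∧ ∀ (N : ℕ) (_ : NeZero N) (χ : DirichletCharacter ℂ N), χ.IsPrimitive →
      χ ≠ 1 → ∀ t : ℝ, ‖DirichletCharacter.LFunction χ (σ + t * Complex.I)‖ ≤
        C * (N : ℝ) ^ ((1 - σ) / 2 + δ) * (1 + |t|) ^ (1 - σ + δ) := by
  obtain ⟨hσ0, hσ1⟩ := hσ
  refine ⟨(1 + 1 / δ) * 2 ^ (1 - σ + δ) + 2 * (1 + 1 / δ), by positivity,
    fun N _ χ hχ h1 t ↦ ?_⟩
  set A := 1 + 1 / δ with hA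
  have hA0 : 0 < A := by positivity
  set s : ℂ := σ + t * Complex.I with hs
  have hre : s.re = σ := by simp [hs]
  set u := 1 + |t| with hu
  have hu1 : 1 ≤ u := by simp [hu]
  have hu0 : 0 < u := by linarith
  have hN1 : (1 : ℝ) ≤ N := by exact_mod_cast NeZero.pos N
  have hN0 : (0 : ℝ) < N := by linarith
  have hq1 : 1 ≤ √(N : ℝ) := Real.one_le_sqrt.mpr hN1
  have hq (e : ℝ) : √(N : ℝ) ^ e = (N : ℝ) ^ (e / 2) := by
    rw [Real.sqrt_eq_rpow, ← Real.rpow_mul hN0.le]; congr 1; ring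
  -- `X` balances the trivial bound `X ^ (1 - σ)` for the finite sum against the tail
  -- `u √N X ^ (-σ)`.
  set X := √(N : ℝ) * u with hX
  have hX1 : 1 ≤ X := one_le_mul_of_one_le_of_one_le hq1 hu1
  have hX0 : 0 < X := by linarith
  set T := ⌈X⌉₊ with hT
  have hXT : X ≤ T := Nat.le_ceil X
  have hTX : (T : ℝ) ≤ 2 * X := by
    have := Nat.ceil_lt_add_one hX0.le
    linarith
  have hT1 : 1 ≤ T := Nat.one_le_ceil_iff.mpr hX0
  have htr := LFunction_trunc h1 (fun m n h ↦ polya_vinogradov hχ h1 h) hT1 (s := s) (by linarith)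
  have hsum := norm_sum_le_rpow χ (hre.le.trans hσ1) hδ hT1
  rw [hre] at htr hsum
  have hsu : ‖s‖ ≤ u := by
    refine (norm_add_le _ _).trans ?_
    simp only [norm_mul, norm_real, norm_I, mul_one, Real.norm_eq_abs, hu]
    rw [abs_of_pos (by linarith)]
    linarith
  have hE1 : A * (T : ℝ) ^ (1 - σ + δ) ≤
      A * 2 ^ (1 - σ + δ) * ((N : ℝ) ^ ((1 - σ) / 2 + δ) * u ^ (1 - σ + δ)) := by
    calc A * (T : ℝ) ^ (1 - σ + δ) ≤ A * (2 * X) ^ (1 - σ + δ) := by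
          gcongr
      _ = A * 2 ^ (1 - σ + δ) * ((N : ℝ) ^ ((1 - σ + δ) / 2) * u ^ (1 - σ + δ)) := by
          rw [Real.mul_rpow two_pos.le hX0.le, hX, Real.mul_rpow (Real.sqrt_nonneg _) hu0.le, hq]
          ring
      _ ≤ _ := by
          gcongr 2
          gcongr
          linarith
  have hE2 : ‖s‖ * (√N * (1 + Real.log N) * ((T : ℝ) ^ (-σ) / σ)) ≤
      2 * A * ((N : ℝ) ^ ((1 - σ) / 2 + δ) * u ^ (1 - σ + δ)) := by
    have hT' : (T : ℝ) ^ (-σ) / σ ≤ 2 * X ^ (-σ) := by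
      have h3 : (T : ℝ) ^ (-σ) ≤ X ^ (-σ) :=
        Real.rpow_le_rpow_of_nonpos hX0 hXT (by linarith)
      have h4 : 0 ≤ X ^ (-σ) := by positivity
      rw [div_le_iff₀ (by linarith)]
      nlinarith
    have hlog : 0 ≤ 1 + Real.log N := by have := Real.log_nonneg hN1; linarith
    calc _ ≤ u * (√N * (A * (N : ℝ) ^ δ) * (2 * X ^ (-σ))) := by
          gcongr
          exact one_add_log_le hδ hN1
      _ = 2 * A * (X ^ (1 - σ) * (N : ℝ) ^ δ) := by
          rw [sub_eq_add_neg, Real.rpow_add hX0, Real.rpow_one, hX]; ring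
      _ = 2 * A * ((N : ℝ) ^ ((1 - σ) / 2 + δ) * u ^ (1 - σ)) := by
          rw [hX, Real.mul_rpow (Real.sqrt_nonneg _) hu0.le, hq, Real.rpow_add hN0]; ring
      _ ≤ _ := by
          gcongr 2
          gcongr
          linarith
  calc ‖DirichletCharacter.LFunction χ s‖
      ≤ ‖∑ n ∈ Finset.Icc 1 T, χ (n : ZMod N) * (n : ℂ) ^ (-s)‖ + _ := norm_le_norm_add_norm_sub' _ _
    _ ≤ _ := add_le_add (hsum.trans hE1) (htr.trans hE2)
    _ = _ := by ring

theorem LFunction_bound (σ : ℝ) (hσ : σ ∈ Set.Ioc (1/2 : ℝ) 1) (ε : ℝ) (hε : 0 < ε) :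
    ∃ C : ℝ, 0 < C ∧ ∀ (k : ℕ) (_ : NeZero k) (χ : DirichletCharacter ℂ k),
      χ ≠ 1 → ∀ t : ℝ,
      ‖DirichletCharacter.LFunction χ (σ + t * Complex.I)‖ ≤
        C * (k : ℝ) ^ ((1 - σ) / 2 + ε) * (1 + |t|) ^ (1 - σ + ε) := by
  obtain ⟨C₁, hC₁, hL⟩ := LFunction_bound_primitive hσ (half_pos hε)
  obtain ⟨C₂, hC₂, hP⟩ := prod_two_le (half_pos hε)
  obtain ⟨hσ0, hσ1⟩ := hσ
  refine ⟨C₁ * C₂, by positivity, fun k _ χ hχ t ↦ ?_⟩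
  have hd : NeZero χ.conductor := ⟨χ.conductor_ne_zero⟩
  have hψ : χ.primitiveCharacter ≠ 1 := by
    intro h
    apply hχ
    rw [← χ.changeLevel_primitiveCharacter, h, DirichletCharacter.changeLevel_one]
  have hk0 : (0 : ℝ) < k := by exact_mod_cast NeZero.pos k
  have hdk : (χ.conductor : ℝ) ≤ k := by
    exact_mod_cast Nat.le_of_dvd (NeZero.pos k) χ.conductor_dvd_level
  have h1 := DirichletCharacter.LFunction_changeLevel χ.conductor_dvd_level χ.primitiveCharacter
    (s := σ + t * Complex.I) (Or.inl hψ)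
  rw [χ.changeLevel_primitiveCharacter] at h1
  rw [h1, norm_mul, norm_prod]
  have h2 : ∏ p ∈ k.primeFactors,
      ‖1 - χ.primitiveCharacter p * (p : ℂ) ^ (-(σ + t * Complex.I : ℂ))‖ ≤
        C₂ * (k : ℝ) ^ (ε / 2) := by
    refine (Finset.prod_le_prod (fun _ _ ↦ norm_nonneg _) fun p hp ↦ ?_).trans
      (hP k (NeZero.ne k))
    have hp1 := (Nat.prime_of_mem_primeFactors hp).one_le
    refine (norm_sub_le _ _).trans ?_
    rw [norm_one, norm_mul, norm_natCast_cpow_of_pos hp1]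
    have : (p : ℝ) ^ (-(σ + t * Complex.I : ℂ)).re ≤ 1 :=
      Real.rpow_le_one_of_one_le_of_nonpos (by exact_mod_cast hp1) (by simp; linarith)
    have h3 := DirichletCharacter.norm_le_one χ.primitiveCharacter p
    have h4 : 0 ≤ (p : ℝ) ^ (-(σ + t * Complex.I : ℂ)).re := by positivity
    nlinarith [mul_le_one₀ h3 h4 this]
  have hu : (1 : ℝ) ≤ 1 + |t| := by simp
  calc _ ≤ (C₁ * (χ.conductor : ℝ) ^ ((1 - σ) / 2 + ε / 2) * (1 + |t|) ^ (1 - σ + ε / 2)) *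
        (C₂ * (k : ℝ) ^ (ε / 2)) :=
        mul_le_mul (hL _ hd _ χ.primitiveCharacter_isPrimitive hψ t) h2
          (Finset.prod_nonneg fun _ _ ↦ norm_nonneg _) (by positivity)
    _ ≤ (C₁ * (k : ℝ) ^ ((1 - σ) / 2 + ε / 2) * (1 + |t|) ^ (1 - σ + ε)) *
        (C₂ * (k : ℝ) ^ (ε / 2)) := by
        gcongr ?_ * ?_
        gcongr C₁ * ?_ * ?_
        · exact Real.rpow_le_rpow (by positivity) hdk (by linarith)
        · exact Real.rpow_le_rpow_of_exponent_le hu (by linarith)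
    _ = _ := by
        rw [show (1 - σ) / 2 + ε = ((1 - σ) / 2 + ε / 2) + ε / 2 by ring, 
          Real.rpow_add hk0 ((1 - σ) / 2 + ε / 2) (ε / 2)]
        ring
end

section
/- Let $Q(\mathbf{x}) = A_1 x_1^2 + \cdots + A_4 x_4^2$ with nonzero integers $A_i$ and discriminant $\Delta_Q = A_1 A_2 A_3 A_4$, and let $q$ be a square-free positive integer. Then for any $\varepsilon > 0$, $|S_q(\mathbf{c})| \ll_\varepsilon q^{5/2+\varepsilon} \gcd(q, \Delta_Q \widetilde{Q}(\mathbf{c}))^{1/2} \prod_{i=1}^4 \gcd(q, A_i)^{1/2}$, where $\widetilde{Q}(\mathbf{c}) = \Delta_Q \cdot (A_1^{-1}c_1^2 + \cdots + A_4^{-1}c_4^2)$ is an integer, and $S_q(\mathbf{c}) = \sum_{a=1,\gcd(a,q)=1}^q \sum_{\mathbf{b}\bmod q} e^{2\pi i(aQ(\mathbf{b}) + \mathbf{b}\cdot\mathbf{c})/q}$. -/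
/-!
The bound holds with constant `16` and without the loss of `q ^ ε`.

Put `S(R, ψ) = ∑_{a ∈ Rˣ} ∏_i ∑_{x ∈ R} ψ(a A_i x² + c_i x)` for a finite ring `R` with additive
character `ψ`; then `S_q(c)` is `S(ℤ/q, e(·/q))`. This sum is multiplicative over products of rings
(`ringSum_prod`), and a primitive character restricts to primitive characters on the factors.
Proving the bound for every primitive `ψ` at once, the Chinese remainder theorem therefore reduces
the square-free case to primes, because the right-hand side is also multiplicative.

For an odd prime `p`, completing the square gives
`∑_x ψ(α x² + γ x) = ψ(-γ² / (4α)) χ(α) g` for `α ≠ 0`, where `χ` is the quadratic character and `g`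
its Gauss sum, with `|g| = √p` (`quadSum_eq`). If `p` divides `Δ_Q Q̃(c)`, the sum over `a` is
estimated trivially, with `√p` for each `i` with `p ∤ A_i` and `p` for the other ones. If `p` does
not divide `Δ_Q Q̃(c)`, the four factors `χ(a)` cancel and the sum over `a` is a Ramanujan sum of
value `-1`, so that `|S_p(c)| = p²` (`norm_ringSum_good`). At `p = 2` the trivial bound `2⁴` is
absorbed by the factor `gcd(q, 2)⁴ ≤ 16`.
-/

open Finset

noncomputable def Sq (n : ℕ) (A : Fin n → ℤ) (q : ℕ) (c : Fin n → ℤ) : ℂ :=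
  ∑ a ∈ (Finset.Icc 1 q).filter (fun a => Nat.gcd a q = 1),
    ∑ b ∈ Fintype.piFinset (fun _ : Fin n => Finset.range q),
      Complex.exp (2 * Real.pi * Complex.I *
        ((a : ℂ) * (∑ i, (A i : ℂ) * (b i : ℂ) ^ 2) + ∑ i, (b i : ℂ) * (c i : ℂ)) / q)

/-- The integer `Q̃(c) = Δ_Q · Q^{-1}(c) = ∑_i (∏_{j ≠ i} A_j) c_i²`. -/
def Qtilde (A : Fin 4 → ℤ) (c : Fin 4 → ℤ) : ℤ :=
  ∑ i, (∏ j ∈ Finset.univ.erase i, A j) * c i ^ 2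

lemma addChar_sum {R ι : Type*} [AddCommMonoid R] (ψ : AddChar R ℂ) (s : Finset ι) (f : ι → R) :
    ψ (∑ i ∈ s, f i) = ∏ i ∈ s, ψ (f i) := by
  classical
  induction s using Finset.induction_on with
  | empty => simp
  | insert i s hi ih => rw [Finset.sum_insert hi, Finset.prod_insert hi, ψ.map_add_eq_mul, ih]

/-! ### The exponential sum over a finite ring -/

/-- The quadratic Gauss sum `∑ x, ψ (α x² + γ x)` over a finite commutative ring. -/
noncomputable def quadSum {R : Type*} [CommRing R] [Fintype R] (ψ : AddChar R ℂ) (α γ : R) : ℂ :=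
  ∑ x, ψ (α * x ^ 2 + γ * x)

/-- The sum `S(c)` over a finite commutative ring `R` with an arbitrary additive character `ψ` in
place of `e(·/q)`; since the form is diagonal, the sum over `b` is written as a product of four
one-variable sums. -/
noncomputable def ringSum (R : Type*) [CommRing R] [Fintype R] [Fintype Rˣ] (ψ : AddChar R ℂ)
    (A c : Fin 4 → ℤ) : ℂ :=
  ∑ a : Rˣ, ∏ i, quadSum ψ (a * (A i : R)) (c i : R)

lemma ringSum_prod {R S : Type*} [CommRing R] [Fintype R] [Fintype Rˣ] [CommRing S] [Fintype S]
    [Fintype Sˣ] [Fintype (R × S)ˣ] (ψ : AddChar (R × S) ℂ) (A c : Fin 4 → ℤ) :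
    ringSum (R × S) ψ A c =
      ringSum R (ψ.compAddMonoidHom (AddMonoidHom.inl R S)) A c *
        ringSum S (ψ.compAddMonoidHom (AddMonoidHom.inr R S)) A c := by
  have hq : ∀ (α γ : R × S), quadSum ψ α γ =
      quadSum (ψ.compAddMonoidHom (AddMonoidHom.inl R S)) α.1 γ.1 *
        quadSum (ψ.compAddMonoidHom (AddMonoidHom.inr R S)) α.2 γ.2 := by
    intro α γ
    unfold quadSum
    rw [Finset.sum_mul_sum, Fintype.sum_prod_type]
    refine Finset.sum_congr rfl fun x _ => Finset.sum_congr rfl fun y _ => ?_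
    simp only [AddChar.compAddMonoidHom_apply, ← AddChar.map_add_eq_mul]
    congr 1
    ext <;> simp
  unfold ringSum
  rw [Finset.sum_mul_sum, ← Fintype.sum_prod_type', ← MulEquiv.prodUnits.symm.toEquiv.sum_comp]
  refine Finset.sum_congr rfl fun x _ => ?_
  rw [← Finset.prod_mul_distrib]
  refine Finset.prod_congr rfl fun i _ => ?_
  rw [hq]
  simp [MulEquiv.prodUnits]

lemma ringSum_equiv {R S : Type*} [CommRing R] [Fintype R] [Fintype Rˣ] [CommRing S] [Fintype S]
    [Fintype Sˣ] (e : R ≃+* S) (ψ : AddChar R ℂ) (A c : Fin 4 → ℤ) :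
    ringSum R ψ A c = ringSum S (ψ.compAddMonoidHom e.symm.toAddMonoidHom) A c := by
  unfold ringSum quadSum
  rw [← (Units.mapEquiv e.toMulEquiv).toEquiv.sum_comp]
  refine Finset.sum_congr rfl fun a _ => Finset.prod_congr rfl fun i _ => ?_
  rw [← e.toEquiv.sum_comp]
  refine Finset.sum_congr rfl fun x _ => ?_
  rw [AddChar.compAddMonoidHom_apply]
  congr 1
  apply e.injective
  simp

/-- The restriction of a primitive character of `R × S` to the first factor is primitive. -/
lemma isPrimitive_inl {R S : Type*} [CommRing R] [CommRing S] {ψ : AddChar (R × S) ℂ}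
    (h : ψ.IsPrimitive) : (ψ.compAddMonoidHom (AddMonoidHom.inl R S)).IsPrimitive := by
  intro a ha h1
  refine h (a := (a, 0)) (by simpa using ha) ?_
  ext ⟨x, y⟩
  have := DFunLike.congr_fun h1 x
  simpa [AddChar.mulShift_apply] using this

lemma isPrimitive_inr {R S : Type*} [CommRing R] [CommRing S] {ψ : AddChar (R × S) ℂ}
    (h : ψ.IsPrimitive) : (ψ.compAddMonoidHom (AddMonoidHom.inr R S)).IsPrimitive := by
  intro a ha h1
  refine h (a := (0, a)) (by simpa using ha) ?_
  ext ⟨x, y⟩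
  have := DFunLike.congr_fun h1 y
  simpa [AddChar.mulShift_apply] using this

lemma isPrimitive_equiv {R S : Type*} [CommRing R] [CommRing S] (e : R ≃+* S) {ψ : AddChar R ℂ}
    (h : ψ.IsPrimitive) : (ψ.compAddMonoidHom e.symm.toAddMonoidHom).IsPrimitive := by
  intro a ha h1
  refine h (a := e.symm a) (by simpa using ha) ?_
  ext x
  have := DFunLike.congr_fun h1 (e x)
  simpa [AddChar.mulShift_apply] using this

lemma quadSum_norm_le {R : Type*} [CommRing R] [Fintype R] (ψ : AddChar R ℂ) (α γ : R) :
    ‖quadSum ψ α γ‖ ≤ Fintype.card R := by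
  unfold quadSum
  refine (norm_sum_le _ _).trans ?_
  simp [AddChar.norm_apply]

/-! ### Finite fields of odd characteristic -/

section Field

variable {F : Type*} [Field F] [Fintype F] [DecidableEq F]

/-- The quadratic character of a finite field, with complex values. -/
noncomputable def cChar (F : Type*) [Field F] [Fintype F] [DecidableEq F] : MulChar F ℂ :=
  (quadraticChar F).ringHomComp (Int.castRingHom ℂ)

lemma cChar_isQuadratic : (cChar F).IsQuadratic := (quadraticChar_isQuadratic F).comp _

lemma cChar_ne_one (hF : ringChar F ≠ 2) : cChar F ≠ 1 := by
  unfold cChar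
  rw [Ne, MulChar.ringHomComp_eq_one_iff (RingHom.injective_int _)]
  exact quadraticChar_ne_one hF

lemma cChar_sq {a : F} (ha : a ≠ 0) : cChar F a ^ 2 = 1 := by
  have := quadraticChar_sq_one ha
  simp only [cChar, MulChar.ringHomComp_apply]
  rw [← map_pow, this, map_one]

lemma norm_gaussSum_cChar (hF : ringChar F ≠ 2) {ψ : AddChar F ℂ} (hψ : ψ.IsPrimitive) :
    ‖gaussSum (cChar F) ψ‖ ^ 2 = Fintype.card F := by
  have hn : ‖cChar F (-1)‖ ^ 2 = 1 := by
    rw [← norm_pow, cChar_sq (by simp), norm_one]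
  rw [← norm_pow, gaussSum_sq (cChar_ne_one hF) cChar_isQuadratic hψ, norm_mul,
    (pow_eq_one_iff_of_nonneg (norm_nonneg _) two_ne_zero).1 hn]
  simp

/-- Counting square roots with the quadratic character. -/
lemma sum_comp_sq (hF : ringChar F ≠ 2) (f : F → ℂ) :
    ∑ x, f (x ^ 2) = ∑ t, (cChar F t + 1) * f t := by
  rw [← Finset.sum_fiberwise' (s := Finset.univ) (g := fun x : F => x ^ 2) f]
  refine Finset.sum_congr rfl fun t _ => ?_
  have h := quadraticChar_card_sqrts hF t
  rw [Finset.sum_const, nsmul_eq_mul]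
  congr 1
  have h2 : ((({x : F | x ^ 2 = t}.toFinset.card : ℤ)) : ℂ) = cChar F t + 1 := by
    rw [h]; simp [cChar]
  rw [← h2]
  simp

/-- Completing the square evaluates the quadratic Gauss sum with nonzero leading coefficient. -/
lemma quadSum_eq (hF : ringChar F ≠ 2) {ψ : AddChar F ℂ} (hψ : ψ.IsPrimitive) {α : F}
    (hα : α ≠ 0) (γ : F) :
    quadSum ψ α γ = ψ (-(γ ^ 2 / (4 * α))) * (cChar F α * gaussSum (cChar F) ψ) := by
  have h2 : (2 : F) ≠ 0 := Ring.two_ne_zero hF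
  have h4 : (4 : F) ≠ 0 := by
    have : (4 : F) = 2 * 2 := by norm_num
    rw [this]; exact mul_ne_zero h2 h2
  have hpure : ∑ x, ψ (α * x ^ 2) = cChar F α * gaussSum (cChar F) ψ := by
    rw [sum_comp_sq hF (fun t => ψ (α * t))]
    simp only [add_mul, one_mul, Finset.sum_add_distrib]
    have hz : ∑ t, ψ (α * t) = 0 := by
      have := AddChar.sum_mulShift α hψ
      simp only [hα, if_false, mul_comm _ α] at this
      exact_mod_cast this
    rw [hz, add_zero]
    have hg := gaussSum_mulShift_eq (cChar F) ψ (Units.mk0 α hα)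
    rw [cChar_isQuadratic.inv] at hg
    simpa [gaussSum, AddChar.mulShift_apply] using hg
  rw [← hpure, Finset.mul_sum]
  unfold quadSum
  rw [← Equiv.sum_comp (Equiv.addRight (-(γ / (2 * α))))]
  refine Finset.sum_congr rfl fun x _ => ?_
  rw [← AddChar.map_add_eq_mul]
  congr 1
  simp only [Equiv.coe_addRight]
  field_simp
  ring

lemma norm_quadSum (hF : ringChar F ≠ 2) {ψ : AddChar F ℂ} (hψ : ψ.IsPrimitive) {α : F}
    (hα : α ≠ 0) (γ : F) : ‖quadSum ψ α γ‖ = Real.sqrt (Fintype.card F) := by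
  have hn : ‖cChar F α‖ ^ 2 = 1 := by rw [← norm_pow, cChar_sq hα, norm_one]
  rw [quadSum_eq hF hψ hα, norm_mul, norm_mul, AddChar.norm_apply,
    (pow_eq_one_iff_of_nonneg (norm_nonneg _) two_ne_zero).1 hn, ← norm_gaussSum_cChar hF hψ,
    Real.sqrt_sq (norm_nonneg _), one_mul, one_mul]

/-- The good case: the four quadratic characters of `a` cancel, so the sum over `a` is a complete
sum of a nontrivial additive character over `F ∖ {0}`, which equals `-1`. -/
lemma norm_ringSum_good [Fintype Fˣ] (hF : ringChar F ≠ 2) {ψ : AddChar F ℂ} (hψ : ψ.IsPrimitive)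
    (A c : Fin 4 → ℤ) (hA : ∀ i, (A i : F) ≠ 0) (hQ : (Qtilde A c : F) ≠ 0) :
    ‖ringSum F ψ A c‖ = (Fintype.card F : ℝ) ^ 2 := by
  have h2 : (2 : F) ≠ 0 := Ring.two_ne_zero hF
  have h4 : (4 : F) ≠ 0 := by
    have : (4 : F) = 2 * 2 := by norm_num
    rw [this]; exact mul_ne_zero h2 h2
  set t : F := ∑ i, -((c i : F) ^ 2 / (4 * (A i : F))) with ht
  have ht0 : t ≠ 0 := by
    intro h0
    apply hQ
    have hfac : (Qtilde A c : F) = -(4 * ∏ i, (A i : F)) * t := by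
      rw [ht, Qtilde, Finset.mul_sum]
      push_cast
      refine Finset.sum_congr rfl fun i _ => ?_
      rw [← Finset.mul_prod_erase Finset.univ _ (Finset.mem_univ i)]
      have := hA i
      field_simp
    rw [hfac, h0, mul_zero]
  have hterm : ∀ a : Fˣ, ∏ i, quadSum ψ (a * (A i : F)) (c i : F) =
      ((∏ i, cChar F (A i : F)) * gaussSum (cChar F) ψ ^ 4) * ψ (((a⁻¹ : Fˣ) : F) * t) := by
    intro a
    have hψt : ψ (((a⁻¹ : Fˣ) : F) * t) =
        ∏ i, ψ (-((c i : F) ^ 2 / (4 * (a * (A i : F))))) := by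
      rw [← addChar_sum, ht, Finset.mul_sum]
      congr 1
      refine Finset.sum_congr rfl fun i _ => ?_
      have := hA i
      have := a.ne_zero
      rw [Units.val_inv_eq_inv_val]
      field_simp
    have ha4 : cChar F (a : F) ^ 4 = 1 := by
      rw [show 4 = 2 * 2 from rfl, pow_mul, cChar_sq a.ne_zero, one_pow]
    rw [Finset.prod_congr rfl fun i _ =>
      quadSum_eq hF hψ (mul_ne_zero a.ne_zero (hA i)) (c i : F)]
    rw [Finset.prod_mul_distrib, ← hψt]
    simp only [map_mul, Finset.prod_mul_distrib, Finset.prod_const, Finset.card_univ,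
      Fintype.card_fin, ha4]
    ring
  have hsum : ∑ a : Fˣ, ψ (((a⁻¹ : Fˣ) : F) * t) = -1 := by
    have hinv : ∑ a : Fˣ, ψ (((a⁻¹ : Fˣ) : F) * t) = ∑ a : Fˣ, ψ ((a : F) * t) :=
      Equiv.sum_comp (Equiv.inv Fˣ) (fun a : Fˣ => ψ ((a : F) * t))
    rw [hinv]
    have h := AddChar.sum_mulShift t hψ
    simp only [ht0, if_false, Nat.cast_zero] at h
    rw [Fintype.sum_eq_add_sum_subtype_ne _ (0 : F), zero_mul, AddChar.map_zero_eq_one] at h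
    rw [← unitsEquivNeZero.symm.sum_comp]
    simp only [unitsEquivNeZero, Equiv.coe_fn_symm_mk, Units.val_mk0]
    linear_combination h
  have hn : ∀ i, ‖cChar F (A i : F)‖ = 1 := fun i =>
    (pow_eq_one_iff_of_nonneg (norm_nonneg _) two_ne_zero).1
      (by rw [← norm_pow, cChar_sq (hA i), norm_one])
  unfold ringSum
  rw [Finset.sum_congr rfl fun a _ => hterm a, ← Finset.mul_sum, hsum]
  simp only [norm_mul, norm_prod, hn, norm_neg, norm_one, norm_pow, Finset.prod_const_one]
  rw [← norm_gaussSum_cChar hF hψ]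
  ring

end Field

/-! ### The bound at primes and for square-free moduli -/

/-- The right-hand side of the bound, with the `2`-part `gcd(q, 2) ^ 4` recording the trivial
estimate at the prime `2`. In this form the bound is multiplicative in `q`. -/
noncomputable def bd (D : ℕ) (A : Fin 4 → ℤ) (q : ℕ) : ℝ :=
  (Nat.gcd q 2 : ℝ) ^ 4 * (q : ℝ) ^ ((5 : ℝ) / 2) * Real.sqrt (Nat.gcd q D) *
    ∏ i, Real.sqrt (Nat.gcd q (A i).natAbs)

lemma bd_mul (D : ℕ) (A : Fin 4 → ℤ) {m n : ℕ} (h : Nat.Coprime m n) :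
    bd D A (m * n) = bd D A m * bd D A n := by
  have hg : ∀ k, Nat.gcd (m * n) k = Nat.gcd m k * Nat.gcd n k := fun k => by
    rw [Nat.gcd_comm, Nat.Coprime.gcd_mul k h, Nat.gcd_comm k, Nat.gcd_comm k]
  unfold bd
  simp only [hg, Nat.cast_mul, Real.sqrt_mul (Nat.cast_nonneg _),
    Real.mul_rpow (Nat.cast_nonneg m) (Nat.cast_nonneg n), Finset.prod_mul_distrib]
  ring

lemma one_le_sqrt_gcd {q : ℕ} (hq : 0 < q) (k : ℕ) : 1 ≤ Real.sqrt (Nat.gcd q k) := by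
  rw [Real.one_le_sqrt]
  exact_mod_cast Nat.gcd_pos_of_pos_left _ hq

lemma rpow_five_half {x : ℝ} (hx : 0 ≤ x) : x ^ ((5 : ℝ) / 2) = x ^ 2 * Real.sqrt x := by
  rw [show (5 : ℝ) / 2 = ((2 : ℕ) : ℝ) + 1 / 2 by norm_num,
    Real.rpow_add_of_nonneg hx (by positivity) (by positivity), Real.rpow_natCast,
    Real.sqrt_eq_rpow]

lemma units_card_le (p : ℕ) [Fact p.Prime] : (Fintype.card (ZMod p)ˣ : ℝ) ≤ p := by
  have := (ZMod.card_units p).le.trans (Nat.sub_le p 1)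
  exact_mod_cast this

/-- The bound at an odd prime, with constant `1`. If `p ∣ Δ_Q Q̃(c)` the four inner sums are bounded
separately; the factor `√p` lost over `p ^ (5/2)` is then supplied by the first gcd. -/
lemma ringSum_odd (p : ℕ) [Fact p.Prime] (hp2 : p ≠ 2) {ψ : AddChar (ZMod p) ℂ}
    (hψ : ψ.IsPrimitive) (A c : Fin 4 → ℤ) :
    ‖ringSum (ZMod p) ψ A c‖ ≤
      (p : ℝ) ^ 2 * Real.sqrt p * Real.sqrt (Nat.gcd p ((∏ i, A i) * Qtilde A c).natAbs) *
      ∏ i, Real.sqrt (Nat.gcd p (A i).natAbs) := by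
  have hp : p.Prime := Fact.out
  have hF : ringChar (ZMod p) ≠ 2 := by rwa [ZMod.ringChar_zmod_n]
  have hp1 : (1 : ℝ) ≤ p := by exact_mod_cast hp.one_le
  have hs1 : 1 ≤ Real.sqrt p := Real.one_le_sqrt.2 hp1
  have hprod : 1 ≤ ∏ i, Real.sqrt (Nat.gcd p (A i).natAbs) :=
    Finset.one_le_prod fun i _ => one_le_sqrt_gcd hp.pos _
  have hdvd : ∀ z : ℤ, (z : ZMod p) = 0 ↔ p ∣ z.natAbs := fun z => by
    rw [ZMod.intCast_zmod_eq_zero_iff_dvd, Int.natCast_dvd]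
  by_cases hD : (((∏ i, A i) * Qtilde A c : ℤ) : ZMod p) = 0
  · rw [Nat.gcd_eq_left ((hdvd _).1 hD)]
    have hG : ∀ (a : (ZMod p)ˣ) i, ‖quadSum ψ (a * (A i : ZMod p)) (c i : ZMod p)‖ ≤
        Real.sqrt p * Real.sqrt (Nat.gcd p (A i).natAbs) := by
      intro a i
      by_cases hAi : (A i : ZMod p) = 0
      · rw [Nat.gcd_eq_left ((hdvd _).1 hAi), Real.mul_self_sqrt (by positivity)]
        simpa [ZMod.card] using quadSum_norm_le ψ (a * (A i : ZMod p)) (c i : ZMod p)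
      · rw [norm_quadSum hF hψ (mul_ne_zero a.ne_zero hAi), ZMod.card]
        exact le_mul_of_one_le_right (by positivity) (one_le_sqrt_gcd hp.pos _)
    have hs : Real.sqrt p ^ 2 = p := Real.sq_sqrt (by positivity)
    calc ‖ringSum (ZMod p) ψ A c‖
        ≤ ∑ a : (ZMod p)ˣ, ∏ i, (Real.sqrt p * Real.sqrt (Nat.gcd p (A i).natAbs)) := by
          refine (norm_sum_le _ _).trans (Finset.sum_le_sum fun a _ => ?_)
          rw [norm_prod]
          exact Finset.prod_le_prod (fun _ _ => norm_nonneg _) fun i _ => hG a i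
      _ = Fintype.card (ZMod p)ˣ * ((p : ℝ) ^ 2 * ∏ i, Real.sqrt (Nat.gcd p (A i).natAbs)) := by
          rw [Finset.sum_const, nsmul_eq_mul, Finset.card_univ, Finset.prod_mul_distrib,
            Finset.prod_const, Finset.card_univ, Fintype.card_fin,
            show Real.sqrt p ^ 4 = (Real.sqrt p ^ 2) ^ 2 by ring, hs]
      _ ≤ p * ((p : ℝ) ^ 2 * ∏ i, Real.sqrt (Nat.gcd p (A i).natAbs)) := by
          exact mul_le_mul_of_nonneg_right (units_card_le p) (by positivity)
      _ = _ := by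
          rw [mul_assoc ((p : ℝ) ^ 2), Real.mul_self_sqrt (by positivity)]
          ring
  · rw [Int.cast_mul, Int.cast_prod] at hD
    have hA : ∀ i, (A i : ZMod p) ≠ 0 := fun i =>
      Finset.prod_ne_zero_iff.1 (left_ne_zero_of_mul hD) i (Finset.mem_univ i)
    rw [norm_ringSum_good hF hψ A c hA (right_ne_zero_of_mul hD), ZMod.card]
    have h1 := one_le_sqrt_gcd hp.pos ((∏ i, A i) * Qtilde A c).natAbs
    rw [mul_assoc, mul_assoc]
    exact le_mul_of_one_le_right (by positivity)
      (one_le_mul_of_one_le_of_one_le hs1 (one_le_mul_of_one_le_of_one_le h1 hprod))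

lemma ringSum_trivial (p : ℕ) [Fact p.Prime] (ψ : AddChar (ZMod p) ℂ) (A c : Fin 4 → ℤ) :
    ‖ringSum (ZMod p) ψ A c‖ ≤ ((p - 1 : ℕ) : ℝ) * (p : ℝ) ^ 4 := by
  calc ‖ringSum (ZMod p) ψ A c‖ ≤ ∑ a : (ZMod p)ˣ, ∏ _i : Fin 4, (p : ℝ) := by
        refine (norm_sum_le _ _).trans (Finset.sum_le_sum fun a _ => ?_)
        rw [norm_prod]
        refine Finset.prod_le_prod (fun _ _ => norm_nonneg _) fun i _ => ?_
        simpa [ZMod.card] using quadSum_norm_le ψ (a * (A i : ZMod p)) (c i : ZMod p)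
    _ = _ := by
        rw [Finset.sum_const, nsmul_eq_mul, Finset.card_univ, ZMod.card_units]
        simp

lemma ringSum_prime (p : ℕ) [Fact p.Prime] {ψ : AddChar (ZMod p) ℂ}
    (hψ : ψ.IsPrimitive) (A c : Fin 4 → ℤ) :
    ‖ringSum (ZMod p) ψ A c‖ ≤ bd ((∏ i, A i) * Qtilde A c).natAbs A p := by
  have hp : p.Prime := Fact.out
  unfold bd
  by_cases hp2 : p = 2
  · subst hp2
    refine (ringSum_trivial 2 ψ A c).trans ?_
    have hprod : 1 ≤ ∏ i, Real.sqrt (Nat.gcd 2 (A i).natAbs) :=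
      Finset.one_le_prod fun i _ => one_le_sqrt_gcd two_pos _
    have h1 := one_le_sqrt_gcd two_pos ((∏ i, A i) * Qtilde A c).natAbs
    have h2 : 1 ≤ ((2 : ℕ) : ℝ) ^ ((5 : ℝ) / 2) := Real.one_le_rpow (by norm_num) (by norm_num)
    rw [mul_assoc, mul_assoc, Nat.gcd_self]
    have := one_le_mul_of_one_le_of_one_le h2 (one_le_mul_of_one_le_of_one_le h1 hprod)
    norm_num at this ⊢
    linarith
  · have hg : Nat.gcd p 2 = 1 := (Nat.coprime_primes hp Nat.prime_two).2 hp2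
    rw [hg, rpow_five_half (Nat.cast_nonneg p), Nat.cast_one, one_pow, one_mul]
    exact ringSum_odd p hp2 hψ A c

lemma ringSum_squarefree (A c : Fin 4 → ℤ) (q : ℕ) :
    ∀ [NeZero q], Squarefree q → ∀ ψ : AddChar (ZMod q) ℂ, ψ.IsPrimitive →
      ‖ringSum (ZMod q) ψ A c‖ ≤ bd ((∏ i, A i) * Qtilde A c).natAbs A q := by
  induction q using induction_on_primes with
  | zero => exact fun {h} => absurd rfl h.out
  | one =>
    intro _ _ ψ _
    have hψ : ψ = 1 := DFunLike.ext _ _ fun x => by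
      rw [Subsingleton.elim x 0, AddChar.map_zero_eq_one, AddChar.map_zero_eq_one]
    subst hψ
    simp [ringSum, quadSum, bd]
  | prime_mul p m hp ih =>
    intro hne hsq ψ hψ
    have hcop : Nat.Coprime p m := Nat.coprime_of_squarefree_mul hsq
    have : Fact p.Prime := ⟨hp⟩
    have : NeZero m := ⟨right_ne_zero_of_mul hne.out⟩
    let e := ZMod.chineseRemainder hcop
    have hψ' := isPrimitive_equiv e hψ
    rw [ringSum_equiv e, ringSum_prod, norm_mul, bd_mul _ _ hcop]
    exact mul_le_mul (ringSum_prime p (isPrimitive_inl hψ') A c)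
      (ih (hsq.of_mul_right) _ (isPrimitive_inr hψ')) (norm_nonneg _)
      ((norm_nonneg _).trans (ringSum_prime p (isPrimitive_inl hψ') A c))

/-! ### From integer representatives to `ZMod q` -/

/-- Reduction modulo `q` identifies the sum over integer representatives with the sum over the
ring `ZMod q`. -/
lemma Sq_eq_ringSum (A c : Fin 4 → ℤ) (q : ℕ) [NeZero q] :
    Sq 4 A q c = ringSum (ZMod q) ZMod.stdAddChar A c := by
  have hrange : ∀ f : ZMod q → ℂ, ∑ b ∈ Finset.range q, f (b : ZMod q) = ∑ x, f x := by
    intro f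
    refine Finset.sum_bij' (fun b _ => (b : ZMod q)) (fun x _ => x.val) ?_ ?_ ?_ ?_ ?_
    · simp
    · intro x _
      exact Finset.mem_range.2 (ZMod.val_lt x)
    · intro b hb
      exact ZMod.val_cast_of_lt (Finset.mem_range.1 hb)
    · intro x _
      exact ZMod.natCast_zmod_val x
    · simp
  -- The representatives `1, …, q` and `0, …, q - 1` carry the same sum over coprime classes.
  have hunits : ∀ f : ZMod q → ℂ,
      ∑ a ∈ (Finset.Icc 1 q).filter (fun a => Nat.gcd a q = 1), f (a : ZMod q) =
        ∑ a : (ZMod q)ˣ, f a := by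
    intro f
    have hI : ∑ a ∈ (Finset.Icc 1 q).filter (fun a => Nat.gcd a q = 1), f (a : ZMod q) =
        ∑ a ∈ Finset.range q, if IsUnit (a : ZMod q) then f (a : ZMod q) else 0 := by
      simp_rw [ZMod.isUnit_iff_coprime]
      rw [Finset.sum_filter, Finset.range_eq_Ico]
      obtain ⟨k, rfl⟩ : ∃ k, q = k + 1 := Nat.exists_eq_succ_of_ne_zero (NeZero.ne q)
      rw [← Finset.Ico_add_one_right_eq_Icc, Finset.sum_Ico_succ_top (by omega),
        Finset.sum_eq_sum_Ico_succ_bot (a := 0) (by omega), add_comm]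
      simp [Nat.Coprime]
    rw [hI, hrange (fun x => if IsUnit x then f x else 0), ← Finset.sum_filter]
    symm
    refine Finset.sum_bij (fun a _ => (a : ZMod q)) ?_ ?_ ?_ ?_
    · simp
    · intro a _ b _ h
      exact Units.ext h
    · intro b hb
      obtain ⟨u, rfl⟩ := (Finset.mem_filter.1 hb).2
      exact ⟨u, Finset.mem_univ _, rfl⟩
    · simp
  unfold Sq ringSum
  rw [← hunits (fun a => ∏ i, quadSum ZMod.stdAddChar (a * (A i : ZMod q)) (c i : ZMod q))]
  refine Finset.sum_congr rfl fun a _ => ?_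
  unfold quadSum
  rw [Finset.prod_congr rfl fun i _ => (hrange (fun x => ZMod.stdAddChar
    ((a : ZMod q) * (A i : ZMod q) * x ^ 2 + (c i : ZMod q) * x))).symm, Finset.prod_univ_sum]
  refine Finset.sum_congr rfl fun b _ => ?_
  rw [← addChar_sum]
  have hz : ∑ i, ((a : ZMod q) * (A i : ZMod q) * (b i : ZMod q) ^ 2 +
      (c i : ZMod q) * (b i : ZMod q)) =
      ((((a : ℤ) * ∑ i, A i * (b i : ℤ) ^ 2) + ∑ i, (b i : ℤ) * c i : ℤ) : ZMod q) := by
    push_cast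
    rw [Finset.mul_sum, ← Finset.sum_add_distrib]
    exact Finset.sum_congr rfl fun i _ => by ring
  rw [hz, ZMod.stdAddChar_coe]
  push_cast
  rfl

theorem Sq_squarefree_bound (ε : ℝ) (hε : 0 < ε) :
    ∃ C : ℝ, 0 < C ∧ ∀ (A : Fin 4 → ℤ), (∀ i, A i ≠ 0) →
      ∀ (q : ℕ), 0 < q → Squarefree q → ∀ (c : Fin 4 → ℤ),
      ‖Sq 4 A q c‖ ≤ C * (q : ℝ) ^ ((5 : ℝ) / 2 + ε) *
        Real.sqrt (Nat.gcd q ((∏ i, A i) * Qtilde A c).natAbs) *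
        ∏ i, Real.sqrt (Nat.gcd q (A i).natAbs) := by
  -- `16` bounds the factor `gcd(q, 2) ^ 4`; the factor `q ^ ε` is at least `1`.
  refine ⟨16, by norm_num, fun A _ q hq hsq c => ?_⟩
  have : NeZero q := ⟨hq.ne'⟩
  rw [Sq_eq_ringSum]
  refine (ringSum_squarefree A c q hsq _ (ZMod.isPrimitive_stdAddChar q)).trans ?_
  have hq1 : (1 : ℝ) ≤ q := by exact_mod_cast hq
  have hg : (Nat.gcd q 2 : ℝ) ≤ 2 := by exact_mod_cast Nat.gcd_le_right q two_pos
  have hg4 : (Nat.gcd q 2 : ℝ) ^ 4 ≤ 16 :=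
    (pow_le_pow_left₀ (by positivity) hg 4).trans (by norm_num)
  have hpow : (q : ℝ) ^ ((5 : ℝ) / 2) ≤ (q : ℝ) ^ ((5 : ℝ) / 2 + ε) :=
    Real.rpow_le_rpow_of_exponent_le hq1 (by linarith)
  unfold bd
  gcongr
end
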